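/- Let (X,V) : ℝ → ℝ³ × ℝ³ be a global C¹ solution of the repulsive Kepler ODE with X(t) ≠ 0 for all t, and write ⟨t⟩ = √(4 + t²). Suppose there exist times 0 ≤ t₁ < t₂ with |X(t₁)| ≤ ⟨t₁⟩ and |X(t₂)| ≥ 10⟨t₂⟩. Then |X(t)| ≥ ⟨t⟩ for all t ≥ t₂; that is, once a trajectory passes from the close region {|X(t)| ≤ ⟨t⟩} to the far region {|X(t)| ≥ 10⟨t⟩}, it remains in the far region {|X(t)| ≥ ⟨t⟩} for all later times. -/

import Mathlib

/-!
The radius `r = ‖X‖` of a repulsive Kepler trajectory is a convex function of time: `r' = ⟪X, V⟫ / r`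
and `r'' = (‖V‖² + q / (2 r)) / r - ⟪X, V⟫² / r³ ≥ 0` by Cauchy–Schwarz. Between `t₁` and `t₂` the
radius grows with average slope at least `9 ⟨t₂⟩ / t₂ ≥ 1`, so by convexity every later secant has
slope at least `1`, while `⟨t⟩` is `1`-Lipschitz. Hence `r` stays above `⟨t⟩` after `t₂`.
-/

noncomputable section

/-- Euclidean three-space. -/
abbrev R3 : Type := EuclideanSpace ℝ (Fin 3)

lemma kepler_hasDerivAt_norm (X V : ℝ → R3) (hX0 : ∀ t, X t ≠ 0)
    (hX : ∀ t, HasDerivAt X (V t) t) (t : ℝ) :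
    HasDerivAt (fun s => ‖X s‖) (inner ℝ (X t) (V t) / ‖X t‖) t := by
  have hr : 0 < ‖X t‖ := norm_pos_iff.mpr (hX0 t)
  have h := (hX t).norm_sq.sqrt (by positivity)
  simp only [Real.sqrt_sq (norm_nonneg _)] at h
  convert h using 1
  field_simp

lemma kepler_convexOn_norm (q : ℝ) (hq : 0 < q) (X V : ℝ → R3) (hX0 : ∀ t, X t ≠ 0)
    (hX : ∀ t, HasDerivAt X (V t) t)
    (hV : ∀ t, HasDerivAt V ((q / 2 / ‖X t‖ ^ 3) • X t) t) :
    ConvexOn ℝ Set.univ (fun s => ‖X s‖) := by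
  have h1 := kepler_hasDerivAt_norm X V hX0 hX
  have h2 : ∀ t, HasDerivAt (fun s => inner ℝ (X s) (V s) / ‖X s‖) _ t := fun t =>
    ((hX t).inner ℝ (hV t)).div (h1 t) (norm_ne_zero_iff.mpr (hX0 t))
  have hd : deriv (fun s => ‖X s‖) = fun s => inner ℝ (X s) (V s) / ‖X s‖ :=
    funext fun t => (h1 t).deriv
  refine Monotone.convexOn_univ_of_deriv (fun t => (h1 t).differentiableAt) ?_
  rw [hd]
  refine monotone_of_deriv_nonneg (fun t => (h2 t).differentiableAt) fun t => ?_
  rw [(h2 t).deriv]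
  have hr : 0 < ‖X t‖ := norm_pos_iff.mpr (hX0 t)
  rw [inner_smul_right, real_inner_self_eq_norm_sq, real_inner_self_eq_norm_sq]
  have hcs : inner ℝ (X t) (V t) ^ 2 ≤ ‖X t‖ ^ 2 * ‖V t‖ ^ 2 := by
    rw [← mul_pow]
    exact sq_le_sq' (neg_le_of_abs_le (abs_real_inner_le_norm _ _)) (real_inner_le_norm _ _)
  apply div_nonneg _ (by positivity)
  generalize inner ℝ (X t) (V t) = p at *
  generalize ‖X t‖ = r at *
  have : (q / 2 / r ^ 3 * r ^ 2 + ‖V t‖ ^ 2) * r - p * (p / r)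
      = q / 2 + (r ^ 2 * ‖V t‖ ^ 2 - p ^ 2) / r := by
    field_simp
    ring
  rw [this]
  have := div_nonneg (sub_nonneg.mpr hcs) hr.le
  linarith

/-- Once a global solution of the repulsive Kepler ODE passes from the close region
`{|X(t)| ≤ ⟨t⟩}` to the far region `{|X(t)| ≥ 10⟨t⟩}` (with `⟨t⟩ = √(4 + t²)`),
it remains in the far region `{|X(t)| ≥ ⟨t⟩}` for all later times. -/
theorem kepler_close_to_far_transition (q : ℝ) (hq : 0 < q) (X V : ℝ → R3)
    (hX0 : ∀ t, X t ≠ 0)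
    (hX : ∀ t, HasDerivAt X (V t) t)
    (hV : ∀ t, HasDerivAt V ((q / 2 / ‖X t‖ ^ 3) • X t) t)
    (t₁ t₂ : ℝ) (ht₁ : 0 ≤ t₁) (h12 : t₁ < t₂)
    (hclose : ‖X t₁‖ ≤ Real.sqrt (4 + t₁ ^ 2))
    (hfar : 10 * Real.sqrt (4 + t₂ ^ 2) ≤ ‖X t₂‖) :
    ∀ t, t₂ ≤ t → Real.sqrt (4 + t ^ 2) ≤ ‖X t‖ := by
  intro t ht
  have hle : Real.sqrt (4 + t₁ ^ 2) ≤ Real.sqrt (4 + t₂ ^ 2) := by gcongr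
  have hge : t₂ ≤ Real.sqrt (4 + t₂ ^ 2) := Real.le_sqrt_of_sq_le (by linarith)
  have hsq : Real.sqrt (4 + t₂ ^ 2) ^ 2 = 4 + t₂ ^ 2 := Real.sq_sqrt (by positivity)
  have hlip : Real.sqrt (4 + t ^ 2) ≤ Real.sqrt (4 + t₂ ^ 2) + (t - t₂) :=
    Real.sqrt_le_iff.mpr ⟨by linarith, by nlinarith⟩
  rcases ht.eq_or_lt with rfl | hlt
  · linarith
  have hs := (kepler_convexOn_norm q hq X V hX0 hX hV).slope_mono_adjacent
    (Set.mem_univ t₁) (Set.mem_univ t) h12 hlt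
  have h1 : 1 ≤ (‖X t₂‖ - ‖X t₁‖) / (t₂ - t₁) := by
    rw [le_div_iff₀ (by linarith)]
    linarith
  have h2 := h1.trans hs
  rw [le_div_iff₀ (by linarith)] at h2
  linarith
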